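/- There exists a constant C > 0 with the following property. Let N be a positive integer and σ a positive integer dividing N. Let u be four times continuously differentiable on a neighbourhood of [0,1]², vanishing on the boundary of [0,1]², and satisfying −Δu + u = f on Ω = (0,1)². Let V̂ be the real span of the functions ψ_i^N(x)ψ_j^{σ}(y) for 1 ≤ i ≤ N−1, 1 ≤ j ≤ σ−1, together with ψ_i^{σ}(x)ψ_j^{N}(y) for 1 ≤ i ≤ σ−1, 1 ≤ j ≤ N−1. If û ∈ V̂ satisfies B(û, v) = (f, v) for all v ∈ V̂, then |||u − û||| ≤ C (N^{−1} |u|₂ + σ^{−3} ‖∂⁴u/∂x²∂y²‖_{0,Ω}). -/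

import Mathlib

open MeasureTheory Finset

noncomputable section

/-- The hat function `ψ_i^N` on the uniform mesh of `[0,1]` with `N` intervals. -/
def hat (N i : ℕ) (x : ℝ) : ℝ :=
  if ((i : ℝ) - 1) / N ≤ x ∧ x ≤ (i : ℝ) / N then N * (x - ((i : ℝ) - 1) / N)
  else if (i : ℝ) / N ≤ x ∧ x ≤ ((i : ℝ) + 1) / N then N * (((i : ℝ) + 1) / N - x)
  else 0

/-- The nodal piecewise bilinear interpolant `I_{Nx,Ny} u`. -/
def interp (Nx Ny : ℕ) (u : ℝ × ℝ → ℝ) : ℝ × ℝ → ℝ := fun p =>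
  ∑ i ∈ range (Nx + 1), ∑ j ∈ range (Ny + 1),
    u ((i : ℝ) / Nx, (j : ℝ) / Ny) * hat Nx i p.1 * hat Ny j p.2

/-- The one-directional interpolant `I_{Nx,0} u` (interpolation in the `x`-direction only). -/
def interpX (Nx : ℕ) (u : ℝ × ℝ → ℝ) : ℝ × ℝ → ℝ := fun p =>
  ∑ i ∈ range (Nx + 1), u ((i : ℝ) / Nx, p.2) * hat Nx i p.1

/-- The one-directional interpolant `I_{0,Ny} u` (interpolation in the `y`-direction only). -/
def interpY (Ny : ℕ) (u : ℝ × ℝ → ℝ) : ℝ × ℝ → ℝ := fun p =>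
  ∑ j ∈ range (Ny + 1), u (p.1, (j : ℝ) / Ny) * hat Ny j p.2

/-- The two-scale interpolant `Î_{N,N} u = I_{N,σ}u + I_{σ,N}u − I_{σ,σ}u`. -/
def twoScale (N σ : ℕ) (u : ℝ × ℝ → ℝ) : ℝ × ℝ → ℝ := fun p =>
  interp N σ u p + interp σ N u p - interp σ σ u p

/-- The multiscale interpolant
`I^{(k)}_{N,N} u = Σ_{i=0}^{k} I_{N/2^i, N/2^{k−i}}u − Σ_{i=1}^{k} I_{N/2^i, N/2^{k+1−i}}u`. -/
def msInterp (N k : ℕ) (u : ℝ × ℝ → ℝ) : ℝ × ℝ → ℝ := fun p =>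
  ∑ i ∈ range (k + 1), interp (N / 2 ^ i) (N / 2 ^ (k - i)) u p
    - ∑ i ∈ Finset.Icc 1 k, interp (N / 2 ^ i) (N / 2 ^ (k + 1 - i)) u p

/-- The closed square `[0,1]²`. -/
def unitSquare : Set (ℝ × ℝ) := Set.Icc (0 : ℝ) 1 ×ˢ Set.Icc (0 : ℝ) 1

/-- The open square `Ω = (0,1)²`. -/
def Omega2 : Set (ℝ × ℝ) := Set.Ioo (0 : ℝ) 1 ×ˢ Set.Ioo (0 : ℝ) 1

/-- Partial derivative in `x` (defined a.e. for Lipschitz functions; junk value `0` elsewhere). -/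
def pderivX (v : ℝ × ℝ → ℝ) : ℝ × ℝ → ℝ := fun p => deriv (fun x => v (x, p.2)) p.1

/-- Partial derivative in `y` (defined a.e. for Lipschitz functions; junk value `0` elsewhere). -/
def pderivY (v : ℝ × ℝ → ℝ) : ℝ × ℝ → ℝ := fun p => deriv (fun y => v (p.1, y)) p.2

/-- The `L²(Ω)` norm `‖v‖_{0,Ω}`. -/
def L2norm (v : ℝ × ℝ → ℝ) : ℝ := Real.sqrt (∫ p in Omega2, (v p) ^ 2)

/-- The energy norm `|||v||| = (∫_Ω |∇v|² + ∫_Ω v²)^{1/2}`, gradients taken a.e. -/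
def energyNorm (v : ℝ × ℝ → ℝ) : ℝ :=
  Real.sqrt (∫ p in Omega2, ((pderivX v p) ^ 2 + (pderivY v p) ^ 2 + (v p) ^ 2))

/-- `u` is four times continuously differentiable on a neighbourhood of `[0,1]²`. -/
def C4Near (u : ℝ × ℝ → ℝ) : Prop :=
  ∃ U : Set (ℝ × ℝ), IsOpen U ∧ unitSquare ⊆ U ∧ ContDiffOn ℝ 4 u U

/-- `u` vanishes on the boundary of `[0,1]²`. -/
def VanishOnBoundary (u : ℝ × ℝ → ℝ) : Prop :=
  ∀ p ∈ unitSquare, (p.1 = 0 ∨ p.1 = 1 ∨ p.2 = 0 ∨ p.2 = 1) → u p = 0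

/-- The seminorm `|u|₂ = ‖u_xx‖_{0,Ω} + ‖u_xy‖_{0,Ω} + ‖u_yy‖_{0,Ω}`. -/
def semi2 (u : ℝ × ℝ → ℝ) : ℝ :=
  L2norm (pderivX (pderivX u)) + L2norm (pderivX (pderivY u)) + L2norm (pderivY (pderivY u))

/-- The mixed fourth derivative `∂⁴u/∂x²∂y²`. -/
def uxxyy (u : ℝ × ℝ → ℝ) : ℝ × ℝ → ℝ := pderivX (pderivX (pderivY (pderivY u)))

/-- The bilinear form `B(v,w) = ∫_Ω ∇v·∇w + ∫_Ω v w`, gradients taken a.e. -/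
def Bform (v w : ℝ × ℝ → ℝ) : ℝ :=
  ∫ p in Omega2, (pderivX v p * pderivX w p + pderivY v p * pderivY w p + v p * w p)

/-- The two-scale sparse grid finite element space `V̂`, spanned by
`ψ_i^N(x)ψ_j^σ(y)` for `1 ≤ i ≤ N−1, 1 ≤ j ≤ σ−1` and
`ψ_i^σ(x)ψ_j^N(y)` for `1 ≤ i ≤ σ−1, 1 ≤ j ≤ N−1`. -/
def twoScaleSpace (N σ : ℕ) : Submodule ℝ (ℝ × ℝ → ℝ) :=
  Submodule.span ℝ
    ({g | ∃ i ∈ Finset.Icc 1 (N - 1), ∃ j ∈ Finset.Icc 1 (σ - 1),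
        g = fun p : ℝ × ℝ => hat N i p.1 * hat σ j p.2} ∪
     {g | ∃ i ∈ Finset.Icc 1 (σ - 1), ∃ j ∈ Finset.Icc 1 (N - 1),
        g = fun p : ℝ × ℝ => hat σ i p.1 * hat N j p.2})

/-! ### One-dimensional estimates on a single cell -/

theorem sq_intervalIntegral_le {a b : ℝ} (hab : a ≤ b) {f : ℝ → ℝ}
    (hf : IntervalIntegrable f volume a b)
    (hf2 : IntervalIntegrable (fun x => f x ^ 2) volume a b) :
    (∫ x in a..b, f x) ^ 2 ≤ (b - a) * ∫ x in a..b, f x ^ 2 := by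
  rcases hab.eq_or_lt with rfl | h
  · simp
  set I := ∫ x in a..b, f x with hI
  have hpos : 0 < b - a := sub_pos.2 h
  have key : 0 ≤ ∫ x in a..b, ((b - a) * f x - I) ^ 2 :=
    intervalIntegral.integral_nonneg hab fun x _ => sq_nonneg _
  have heq : ∫ x in a..b, ((b - a) * f x - I) ^ 2
      = (b - a) ^ 2 * (∫ x in a..b, f x ^ 2) - 2 * (b - a) * I * I + (b - a) * I ^ 2 := by
    have : ∀ x, ((b - a) * f x - I) ^ 2
        = (b - a) ^ 2 * f x ^ 2 - 2 * (b - a) * I * f x + I ^ 2 := fun x => by ring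
    simp only [this]
    rw [intervalIntegral.integral_add ((hf2.const_mul _).sub (hf.const_mul _)) (by simp),
      intervalIntegral.integral_sub (hf2.const_mul _) (hf.const_mul _),
      intervalIntegral.integral_const_mul, intervalIntegral.integral_const_mul,
      intervalIntegral.integral_const, ← hI]
    simp
  rw [heq] at key
  have : 0 ≤ (b - a) * ((b - a) * (∫ x in a..b, f x ^ 2) - I ^ 2) := by linarith
  have := nonneg_of_mul_nonneg_right this hpos
  linarith

theorem sq_sub_le_mul_integral_deriv_sq {a b : ℝ} {f f' : ℝ → ℝ}
    (hf : ∀ x, HasDerivAt f (f' x) x) (hf' : Continuous f') {s t : ℝ}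
    (hs : s ∈ Set.Icc a b) (ht : t ∈ Set.Icc a b) :
    (f t - f s) ^ 2 ≤ (b - a) * ∫ x in a..b, f' x ^ 2 := by
  wlog hst : s ≤ t generalizing s t
  · have := this ht hs (le_of_not_ge hst)
    rwa [show (f t - f s) ^ 2 = (f s - f t) ^ 2 by ring]
  rw [← intervalIntegral.integral_eq_sub_of_hasDerivAt (fun x _ => hf x)
    (hf'.intervalIntegrable _ _)]
  refine (sq_intervalIntegral_le hst (hf'.intervalIntegrable _ _)
    ((hf'.pow 2).intervalIntegrable _ _)).trans ?_
  have hmono : ∫ x in s..t, f' x ^ 2 ≤ ∫ x in a..b, f' x ^ 2 :=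
    intervalIntegral.integral_mono_interval hs.1 hst ht.2
      (Filter.Eventually.of_forall fun x => sq_nonneg _) ((hf'.pow 2).intervalIntegrable _ _)
  have h0 : 0 ≤ ∫ x in s..t, f' x ^ 2 :=
    intervalIntegral.integral_nonneg hst fun x _ => sq_nonneg _
  have := hs.1
  have := ht.2
  exact mul_le_mul (by linarith) hmono h0 (by linarith)

theorem integral_slope_sq_le {a b : ℝ} (hab : a < b) {g g' : ℝ → ℝ}
    (hg : ∀ x, HasDerivAt g (g' x) x) (hg' : Continuous g') :
    ∫ _ in a..b, ((g b - g a) / (b - a)) ^ 2 ≤ ∫ x in a..b, g' x ^ 2 := by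
  have h := sq_sub_le_mul_integral_deriv_sq hg hg' (Set.left_mem_Icc.2 hab.le)
    (Set.right_mem_Icc.2 hab.le)
  have hpos : 0 < b - a := sub_pos.2 hab
  rw [intervalIntegral.integral_const, smul_eq_mul, div_pow, ← mul_div_assoc,
    div_le_iff₀ (by positivity)]
  nlinarith

theorem integral_deriv_sub_slope_sq_le {a b : ℝ} (hab : a < b) {g g' : ℝ → ℝ}
    (hg : ∀ x, HasDerivAt g (g' x) x) (hg' : Continuous g') :
    ∫ x in a..b, (g' x - (g b - g a) / (b - a)) ^ 2 ≤ ∫ x in a..b, g' x ^ 2 := by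
  have hpos : 0 < b - a := sub_pos.2 hab
  set m := (g b - g a) / (b - a) with hm
  have hFTC : ∫ x in a..b, g' x = (b - a) * m := by
    rw [intervalIntegral.integral_eq_sub_of_hasDerivAt (fun x _ => hg x)
      (hg'.intervalIntegrable _ _), hm]
    field_simp
  have : ∀ x, (g' x - m) ^ 2 = g' x ^ 2 - 2 * m * g' x + m ^ 2 := fun x => by ring
  simp only [this]
  have i1 : IntervalIntegrable (fun x => g' x ^ 2) volume a b :=
    (hg'.pow 2).intervalIntegrable _ _
  have i2 : IntervalIntegrable (fun x => 2 * m * g' x) volume a b :=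
    (hg'.intervalIntegrable _ _).const_mul _
  rw [intervalIntegral.integral_add (i1.sub i2) (by simp), intervalIntegral.integral_sub i1 i2,
    intervalIntegral.integral_const_mul, hFTC, intervalIntegral.integral_const, smul_eq_mul]
  nlinarith [mul_nonneg hpos.le (sq_nonneg m)]

theorem integral_deriv_sub_slope_sq_le_second {a b : ℝ} (hab : a < b) {g g' g'' : ℝ → ℝ}
    (hg : ∀ x, HasDerivAt g (g' x) x) (hg' : ∀ x, HasDerivAt g' (g'' x) x)
    (hg'' : Continuous g'') :
    ∫ x in a..b, (g' x - (g b - g a) / (b - a)) ^ 2 ≤ (b - a) ^ 2 * ∫ x in a..b, g'' x ^ 2 := by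
  have hc : Continuous g' := continuous_iff_continuousAt.2 fun x => (hg' x).continuousAt
  obtain ⟨ξ, hξ, hξ'⟩ := exists_hasDerivAt_eq_slope g g' hab
    (fun x _ => (hg x).continuousAt.continuousWithinAt) fun x _ => hg x
  rw [← hξ']
  calc ∫ x in a..b, (g' x - g' ξ) ^ 2
      ≤ ∫ _ in a..b, (b - a) * ∫ x in a..b, g'' x ^ 2 := by
        refine intervalIntegral.integral_mono_on hab.le
          (((hc.sub continuous_const).pow 2).intervalIntegrable _ _) (by simp) fun x hx => ?_
        exact sq_sub_le_mul_integral_deriv_sq hg' hg'' (Set.Ioo_subset_Icc_self hξ) hx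
    _ = _ := by rw [intervalIntegral.integral_const, smul_eq_mul]; ring

theorem integral_sub_affine_sq_le {a b : ℝ} (hab : a < b) {g g' : ℝ → ℝ}
    (hg : ∀ x, HasDerivAt g (g' x) x) (hg' : Continuous g') :
    ∫ x in a..b, (g x - (g a + (g b - g a) / (b - a) * (x - a))) ^ 2
      ≤ (b - a) ^ 2 * ∫ x in a..b, (g' x - (g b - g a) / (b - a)) ^ 2 := by
  set m := (g b - g a) / (b - a) with hm
  have he : ∀ x, HasDerivAt (fun x => g x - (g a + m * (x - a))) (g' x - m) x := fun x => by
    have h1 : HasDerivAt (fun x => g a + m * (x - a)) m x := by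
      simpa using (((hasDerivAt_id x).sub_const a).const_mul m).const_add (g a)
    exact (hg x).sub h1
  have hgc : Continuous fun x => g x - (g a + m * (x - a)) :=
    continuous_iff_continuousAt.2 fun x => (he x).continuousAt
  calc ∫ x in a..b, (g x - (g a + m * (x - a))) ^ 2
      ≤ ∫ _ in a..b, (b - a) * ∫ x in a..b, (g' x - m) ^ 2 := by
        refine intervalIntegral.integral_mono_on hab.le
          ((hgc.pow 2).intervalIntegrable _ _) (by simp) fun x hx => ?_
        have := sq_sub_le_mul_integral_deriv_sq he (hg'.sub continuous_const)
          (Set.left_mem_Icc.2 hab.le) hx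
        simpa using this
    _ = _ := by rw [intervalIntegral.integral_const, smul_eq_mul]; ring

/-! ### Hat functions and piecewise linear interpolation -/

theorem hat_eq_max {N : ℕ} (hN : 0 < N) (i : ℕ) (x : ℝ) :
    hat N i x = max 0 (1 - |N * x - i|) := by
  have hN' : (0 : ℝ) < N := by exact_mod_cast hN
  unfold hat
  simp only [div_le_iff₀ hN', le_div_iff₀ hN']
  have e1 : (N : ℝ) * (x - ((i : ℝ) - 1) / N) = N * x - i + 1 := by field_simp; ring
  have e2 : (N : ℝ) * (((i : ℝ) + 1) / N - x) = i + 1 - N * x := by field_simp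
  rw [e1, e2]
  split_ifs with h1 h2
  · rw [abs_of_nonpos (by linarith), max_eq_right (by linarith)]; ring
  · rw [abs_of_nonneg (by linarith), max_eq_right (by linarith)]; ring
  · rw [max_eq_left]
    by_contra! h
    have h' : |(N : ℝ) * x - i| < 1 := by linarith
    rw [abs_lt] at h'
    rcases le_total ((N : ℝ) * x) i with h3 | h3
    · exact h1 ⟨by linarith, by linarith⟩
    · exact h2 ⟨by linarith, by linarith⟩

theorem continuous_hat {N : ℕ} (hN : 0 < N) (i : ℕ) : Continuous (hat N i) := by
  rw [funext (hat_eq_max hN i)]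
  fun_prop

theorem abs_hat_sub_le {N : ℕ} (hN : 0 < N) (i : ℕ) (x y : ℝ) :
    |hat N i x - hat N i y| ≤ N * |x - y| := by
  rw [hat_eq_max hN, hat_eq_max hN]
  calc |max 0 (1 - |(N : ℝ) * x - i|) - max 0 (1 - |(N : ℝ) * y - i|)|
      ≤ |(1 - |(N : ℝ) * x - i|) - (1 - |(N : ℝ) * y - i|)| := by
        rw [max_comm 0, max_comm 0]; exact abs_max_sub_max_le_abs _ _ _
    _ = |(|(N : ℝ) * y - i|) - (|(N : ℝ) * x - i|)| := by congr 1; ring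
    _ ≤ |((N : ℝ) * y - i) - (N * x - i)| := abs_abs_sub_abs_le _ _
    _ = N * |x - y| := by
        rw [show ((N : ℝ) * y - i) - (N * x - i) = N * (y - x) by ring, abs_mul, Nat.abs_cast,
          abs_sub_comm]

theorem abs_deriv_hat_le {N : ℕ} (hN : 0 < N) (i : ℕ) (x : ℝ) : |deriv (hat N i) x| ≤ N := by
  have : LipschitzWith (N : NNReal) (hat N i) := LipschitzWith.of_dist_le_mul fun x y => by
    simpa [Real.dist_eq] using abs_hat_sub_le hN i x y
  simpa using norm_deriv_le_of_lipschitz (x₀ := x) this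

theorem abs_hat_le_one {N : ℕ} (hN : 0 < N) (i : ℕ) (x : ℝ) : |hat N i x| ≤ 1 := by
  rw [hat_eq_max hN, abs_of_nonneg (le_max_left _ _)]
  exact max_le zero_le_one (by linarith [abs_nonneg ((N : ℝ) * x - i)])

theorem differentiableAt_hat {N : ℕ} (hN : 0 < N) (i : ℕ) {x : ℝ} (hx : Irrational x) :
    DifferentiableAt ℝ (hat N i) x := by
  have hne : ∀ m : ℤ, (N : ℝ) * x ≠ m := fun m => (hx.natCast_mul hN.ne').ne_int m
  have h0 : (N : ℝ) * x - i ≠ 0 := sub_ne_zero.2 (by exact_mod_cast hne i)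
  have h1 : 1 - |(N : ℝ) * x - i| ≠ 0 := by
    intro h
    rcases abs_choice ((N : ℝ) * x - i) with h' | h' <;> rw [h'] at h
    · exact hne (i + 1) (by push_cast; linarith)
    · exact hne (i - 1) (by push_cast; linarith)
  have hd : DifferentiableAt ℝ (fun x : ℝ => 1 - |(N : ℝ) * x - i|) x := by
    refine (differentiableAt_const _).sub (DifferentiableAt.abs ?_ h0)
    fun_prop
  have heq : hat N i = fun x => ((1 - |(N : ℝ) * x - i|) + |1 - (|(N : ℝ) * x - i|)|) / 2 := by
    funext x
    rw [hat_eq_max hN]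
    rcases le_total 0 (1 - |(N : ℝ) * x - i|) with h | h
    · rw [max_eq_right h, abs_of_nonneg h]; ring
    · rw [max_eq_left h, abs_of_nonpos h]; ring
  rw [heq]
  exact (hd.add (hd.abs h1)).div_const 2

theorem hat_eq_on_cell {N : ℕ} (hN : 0 < N) (i k : ℕ) {x : ℝ} (h1 : (k : ℝ) ≤ N * x)
    (h2 : N * x ≤ k + 1) :
    hat N i x = (if k = i then k + 1 - N * x else 0) + (if k + 1 = i then N * x - k else 0) := by
  rw [hat_eq_max hN]
  rcases lt_trichotomy i k with h | h | h
  · have : (i : ℝ) + 1 ≤ k := by exact_mod_cast h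
    rw [if_neg (by omega), if_neg (by omega), abs_of_nonneg (by linarith),
      max_eq_left (by linarith)]
    simp
  · subst h
    rw [if_pos rfl, if_neg (by omega), abs_of_nonneg (by linarith), max_eq_right (by linarith)]
    ring
  · rw [if_neg (by omega)]
    rcases (Nat.succ_le_of_lt h).eq_or_lt with h' | h'
    · have h'' : k + 1 = i := h'
      subst h''
      push_cast
      rw [if_pos rfl, abs_of_nonpos (by linarith), max_eq_right (by linarith)]
      ring
    · have : (k : ℝ) + 2 ≤ i := by exact_mod_cast h'
      rw [if_neg (by omega), abs_of_nonpos (by linarith), max_eq_left (by linarith)]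
      simp

theorem hat_eq_zero_of_notMem {N i : ℕ} (hi : i ∈ Finset.Icc 1 (N - 1)) {x : ℝ}
    (hx : x ∉ Set.Ioo (0 : ℝ) 1) : hat N i x = 0 := by
  rw [Finset.mem_Icc] at hi
  have hN : 0 < N := by omega
  have hN' : (0 : ℝ) < N := by exact_mod_cast hN
  have h1 : (1 : ℝ) ≤ i := by exact_mod_cast hi.1
  have h2 : (i : ℝ) + 1 ≤ N := by
    have : i + 1 ≤ N := by omega
    exact_mod_cast this
  rw [hat_eq_max hN, max_eq_left]
  rw [Set.mem_Ioo, not_and_or, not_lt, not_lt] at hx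
  rcases hx with hx | hx
  · rw [abs_of_nonpos (by nlinarith)]; nlinarith
  · rw [abs_of_nonneg (by nlinarith)]; nlinarith

/-- The piecewise linear nodal interpolant of `g` on the uniform mesh with `N` intervals. -/
def linInterp (N : ℕ) (g : ℝ → ℝ) (x : ℝ) : ℝ := ∑ i ∈ range (N + 1), g ((i : ℝ) / N) * hat N i x

theorem linInterp_eq_on_cell {N : ℕ} (hN : 0 < N) (g : ℝ → ℝ) {k : ℕ} (hk : k < N) {x : ℝ}
    (h1 : (k : ℝ) ≤ N * x) (h2 : N * x ≤ k + 1) :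
    linInterp N g x = g ((k : ℝ) / N) * (k + 1 - N * x) + g (((k : ℝ) + 1) / N) * (N * x - k) := by
  unfold linInterp
  simp only [hat_eq_on_cell hN _ k h1 h2, mul_add, mul_ite, mul_zero, Finset.sum_add_distrib,
    Finset.sum_ite_eq, Finset.mem_range]
  rw [if_pos (by omega), if_pos (by omega)]
  push_cast
  ring

theorem exists_cell {N : ℕ} (hN : 0 < N) {x : ℝ} (h0 : 0 ≤ x) (h1 : x ≤ 1) :
    ∃ k < N, (k : ℝ) ≤ N * x ∧ N * x ≤ k + 1 := by
  have hN' : (0 : ℝ) < N := by exact_mod_cast hN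
  rcases h1.eq_or_lt with rfl | h
  · refine ⟨N - 1, by omega, ?_, ?_⟩ <;> rw [Nat.cast_sub (by omega)] <;> norm_num
  · refine ⟨⌊N * x⌋₊, ?_, Nat.floor_le (by positivity), (Nat.lt_floor_add_one _).le⟩
    rw [Nat.floor_lt (by positivity)]
    nlinarith

theorem hat_refine {N σ : ℕ} (hN : 0 < N) (hσ : σ ∣ N) {i : ℕ} (hi : i ∈ Finset.Icc 1 (σ - 1))
    (x : ℝ) :
    hat σ i x = ∑ k ∈ Finset.Icc 1 (N - 1), hat σ i ((k : ℝ) / N) * hat N k x := by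
  by_cases hx : x ∈ Set.Ioo (0 : ℝ) 1
  swap
  · rw [hat_eq_zero_of_notMem hi hx, Finset.sum_eq_zero]
    intro k hk
    rw [hat_eq_zero_of_notMem hk hx, mul_zero]
  have hN' : (0 : ℝ) < N := by exact_mod_cast hN
  have hlin : linInterp N (hat σ i) x
      = ∑ k ∈ Finset.Icc 1 (N - 1), hat σ i ((k : ℝ) / N) * hat N k x := by
    unfold linInterp
    symm
    apply Finset.sum_subset
    · intro k hk
      simp only [Finset.mem_Icc, Finset.mem_range] at hk ⊢
      omega
    · intro k hk hk'
      have : k = 0 ∨ k = N := by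
        simp only [Finset.mem_Icc, Finset.mem_range] at hk hk'
        omega
      rcases this with rfl | rfl
      · rw [hat_eq_zero_of_notMem hi (by simp), zero_mul]
      · rw [hat_eq_zero_of_notMem hi (by rw [div_self hN'.ne']; simp), zero_mul]
  rw [← hlin]
  obtain ⟨m, rfl⟩ := hσ
  obtain ⟨k, hk, h1, h2⟩ := exists_cell hN hx.1.le hx.2.le
  rw [linInterp_eq_on_cell hN _ hk h1 h2]
  have hσ0 : 0 < σ := Nat.pos_of_mul_pos_right hN
  have hm0 : 0 < m := Nat.pos_of_mul_pos_left hN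
  have hσ' : (0 : ℝ) < σ := by exact_mod_cast hσ0
  have hm' : (0 : ℝ) < m := by exact_mod_cast hm0
  push_cast at h1 h2 ⊢
  -- the fine cell `k` lies in the coarse cell `q`
  set q := k / m with hq
  have hq1 : (q : ℝ) * m ≤ k := by exact_mod_cast Nat.div_mul_le_self k m
  have hq2 : (k : ℝ) + 1 ≤ (q + 1) * m := by
    have : k + 1 ≤ (q + 1) * m := by
      have := Nat.div_add_mod k m
      have := Nat.mod_lt k hm0
      rw [hq, add_mul, mul_comm (k / m)]; omega
    exact_mod_cast this
  have e1 : (σ : ℝ) * ((k : ℝ) / (σ * m)) = k / m := by field_simp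
  have e2 : (σ : ℝ) * (((k : ℝ) + 1) / (σ * m)) = (k + 1) / m := by field_simp
  have hx1 : (q : ℝ) ≤ σ * x := by
    by_contra! h
    nlinarith
  have hx2 : σ * x ≤ (q : ℝ) + 1 := by
    by_contra! h
    nlinarith
  rw [hat_eq_on_cell hσ0 i q hx1 hx2,
    hat_eq_on_cell hσ0 i q (x := (k : ℝ) / (σ * m)) (by rw [e1, le_div_iff₀ hm']; exact hq1)
      (by rw [e1, div_le_iff₀ hm']; linarith),
    hat_eq_on_cell hσ0 i q (x := ((k : ℝ) + 1) / (σ * m))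
      (by rw [e2, le_div_iff₀ hm']; linarith) (by rw [e2, div_le_iff₀ hm']; exact hq2), e1, e2]
  split_ifs <;> field_simp <;> ring

theorem linInterp_eq_affine {N : ℕ} (hN : 0 < N) (g : ℝ → ℝ) {k : ℕ} (hk : k < N) {x : ℝ}
    (hx : x ∈ Set.Icc ((k : ℝ) / N) (((k + 1 : ℕ) : ℝ) / N)) :
    linInterp N g x = g ((k : ℝ) / N) + (g (((k + 1 : ℕ) : ℝ) / N) - g ((k : ℝ) / N)) /
      (((k + 1 : ℕ) : ℝ) / N - (k : ℝ) / N) * (x - (k : ℝ) / N) := by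
  have hN' : (0 : ℝ) < N := by exact_mod_cast hN
  have h1 := hx.1
  have h2 := hx.2
  rw [div_le_iff₀ hN'] at h1
  rw [le_div_iff₀ hN'] at h2
  push_cast at h2 ⊢
  rw [linInterp_eq_on_cell hN g hk (by linarith) (by linarith),
    show ((k : ℝ) + 1) / N - k / N = 1 / N by ring]
  field_simp
  ring

theorem deriv_linInterp {N : ℕ} (hN : 0 < N) (g : ℝ → ℝ) {k : ℕ} (hk : k < N) {x : ℝ}
    (hx : x ∈ Set.Ioo ((k : ℝ) / N) (((k + 1 : ℕ) : ℝ) / N)) :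
    deriv (linInterp N g) x = (g (((k + 1 : ℕ) : ℝ) / N) - g ((k : ℝ) / N)) /
      (((k + 1 : ℕ) : ℝ) / N - (k : ℝ) / N) := by
  have hev : linInterp N g =ᶠ[nhds x] fun x => g ((k : ℝ) / N) +
      (g (((k + 1 : ℕ) : ℝ) / N) - g ((k : ℝ) / N)) /
        (((k + 1 : ℕ) : ℝ) / N - (k : ℝ) / N) * (x - (k : ℝ) / N) := by
    filter_upwards [Ioo_mem_nhds hx.1 hx.2] with y hy
    exact linInterp_eq_affine hN g hk (Set.Ioo_subset_Icc_self hy)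
  rw [hev.deriv_eq]
  simp

/-- Estimates on every mesh cell add up to an estimate on the unit interval. -/
theorem integral_le_of_cells {N : ℕ} (hN : 0 < N) {F G : ℝ → ℝ} {c : ℝ} (hG : Continuous G)
    (H : ∀ k < N, (k : ℝ) / N < ((k + 1 : ℕ) : ℝ) / N →
      ((k + 1 : ℕ) : ℝ) / N - (k : ℝ) / N = (N : ℝ)⁻¹ → ∃ F' : ℝ → ℝ, Continuous F' ∧
        (∀ x ∈ Set.Ioo ((k : ℝ) / N) (((k + 1 : ℕ) : ℝ) / N), F x = F' x) ∧
        ∫ x in (k : ℝ) / N..((k + 1 : ℕ) : ℝ) / N, F' x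
          ≤ c * ∫ x in (k : ℝ) / N..((k + 1 : ℕ) : ℝ) / N, G x) :
    IntervalIntegrable F volume 0 1 ∧ ∫ x in (0 : ℝ)..1, F x ≤ c * ∫ x in (0 : ℝ)..1, G x := by
  have hN' : (0 : ℝ) < N := by exact_mod_cast hN
  set a : ℕ → ℝ := fun k => (k : ℝ) / N with ha
  have ha0 : a 0 = 0 := by simp [ha]
  have ha1 : a N = 1 := by simp [ha, hN'.ne']
  have hlen : ∀ k, a (k + 1) - a k = (N : ℝ)⁻¹ := fun k => by
    simp only [ha]; push_cast; field_simp; ring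
  have hlt : ∀ k, a k < a (k + 1) := fun k => by
    have := hlen k
    have : 0 < (N : ℝ)⁻¹ := by positivity
    linarith
  have hcell : ∀ k < N, IntervalIntegrable F volume (a k) (a (k + 1)) ∧
      ∫ x in a k..a (k + 1), F x ≤ c * ∫ x in a k..a (k + 1), G x := by
    intro k hk
    obtain ⟨F', hF', hFF', hle⟩ := H k hk (hlt k) (hlen k)
    have heq : Set.EqOn F F' (Set.uIoo (a k) (a (k + 1))) := by
      rw [Set.uIoo_of_le (hlt k).le]
      exact hFF'
    refine ⟨(hF'.intervalIntegrable _ _).congr_uIoo heq.symm, ?_⟩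
    rw [intervalIntegral.integral_congr_uIoo heq]
    exact hle
  have hFi : ∀ k < N, IntervalIntegrable F volume (a k) (a (k + 1)) := fun k hk => (hcell k hk).1
  rw [← ha0, ← ha1]
  refine ⟨IntervalIntegrable.trans_iterate hFi, ?_⟩
  rw [← intervalIntegral.sum_integral_adjacent_intervals hFi,
    ← intervalIntegral.sum_integral_adjacent_intervals
      (fun k _ => hG.intervalIntegrable (a k) (a (k + 1))), Finset.mul_sum]
  exact Finset.sum_le_sum fun k hk => (hcell k (Finset.mem_range.1 hk)).2

section Interpolation

variable {N : ℕ} {g g' g'' : ℝ → ℝ}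

theorem integral_deriv_linInterp_sq_le (hN : 0 < N) (hg : ∀ x, HasDerivAt g (g' x) x)
    (hg' : Continuous g') :
    IntervalIntegrable (fun x => deriv (linInterp N g) x ^ 2) volume 0 1 ∧
      ∫ x in (0 : ℝ)..1, deriv (linInterp N g) x ^ 2 ≤ ∫ x in (0 : ℝ)..1, g' x ^ 2 := by
  rw [← one_mul (∫ x in (0 : ℝ)..1, g' x ^ 2)]
  refine integral_le_of_cells hN (hg'.pow 2) fun k hk hlt _ => ⟨_, continuous_const,
    fun x hx => by rw [deriv_linInterp hN g hk hx], ?_⟩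
  rw [one_mul]
  exact integral_slope_sq_le hlt hg hg'

theorem integral_deriv_sub_linInterp_sq_le (hN : 0 < N) (hg : ∀ x, HasDerivAt g (g' x) x)
    (hg' : ∀ x, HasDerivAt g' (g'' x) x) (hg'' : Continuous g'') :
    IntervalIntegrable (fun x => (g' x - deriv (linInterp N g) x) ^ 2) volume 0 1 ∧
      ∫ x in (0 : ℝ)..1, (g' x - deriv (linInterp N g) x) ^ 2
        ≤ (N : ℝ)⁻¹ ^ 2 * ∫ x in (0 : ℝ)..1, g'' x ^ 2 := by
  have hc : Continuous g' := continuous_iff_continuousAt.2 fun x => (hg' x).continuousAt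
  refine integral_le_of_cells hN (hg''.pow 2) fun k hk hlt hlen =>
    ⟨_, (hc.sub continuous_const).pow 2,
      fun x hx => by rw [deriv_linInterp hN g hk hx]; rfl, ?_⟩
  rw [← hlen]
  exact integral_deriv_sub_slope_sq_le_second hlt hg hg' hg''

theorem integral_sub_linInterp_sq_le (hN : 0 < N) (hg : ∀ x, HasDerivAt g (g' x) x)
    (hg' : Continuous g') :
    ∫ x in (0 : ℝ)..1, (g x - linInterp N g x) ^ 2
      ≤ (N : ℝ)⁻¹ ^ 2 * ∫ x in (0 : ℝ)..1, g' x ^ 2 := by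
  have hc : Continuous g := continuous_iff_continuousAt.2 fun x => (hg x).continuousAt
  refine (integral_le_of_cells hN (hg'.pow 2) fun k hk hlt hlen =>
    ⟨fun x => (g x - (g ((k : ℝ) / N) + (g (((k + 1 : ℕ) : ℝ) / N) - g ((k : ℝ) / N)) /
      (((k + 1 : ℕ) : ℝ) / N - (k : ℝ) / N) * (x - (k : ℝ) / N))) ^ 2, by fun_prop,
      fun x hx => by rw [linInterp_eq_affine hN g hk (Set.Ioo_subset_Icc_self hx)], ?_⟩).2
  rw [← hlen]
  exact (integral_sub_affine_sq_le hlt hg hg').trans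
    (mul_le_mul_of_nonneg_left (integral_deriv_sub_slope_sq_le hlt hg hg') (sq_nonneg _))

theorem integral_sub_linInterp_sq_le_second (hN : 0 < N) (hg : ∀ x, HasDerivAt g (g' x) x)
    (hg' : ∀ x, HasDerivAt g' (g'' x) x) (hg'' : Continuous g'') :
    ∫ x in (0 : ℝ)..1, (g x - linInterp N g x) ^ 2
      ≤ (N : ℝ)⁻¹ ^ 4 * ∫ x in (0 : ℝ)..1, g'' x ^ 2 := by
  have hc : Continuous g := continuous_iff_continuousAt.2 fun x => (hg x).continuousAt
  have hc' : Continuous g' := continuous_iff_continuousAt.2 fun x => (hg' x).continuousAt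
  refine (integral_le_of_cells hN (hg''.pow 2) fun k hk hlt hlen =>
    ⟨fun x => (g x - (g ((k : ℝ) / N) + (g (((k + 1 : ℕ) : ℝ) / N) - g ((k : ℝ) / N)) /
      (((k + 1 : ℕ) : ℝ) / N - (k : ℝ) / N) * (x - (k : ℝ) / N))) ^ 2, by fun_prop,
      fun x hx => by rw [linInterp_eq_affine hN g hk (Set.Ioo_subset_Icc_self hx)], ?_⟩).2
  rw [← hlen]
  refine (integral_sub_affine_sq_le hlt hg hc').trans
    ((mul_le_mul_of_nonneg_left (integral_deriv_sub_slope_sq_le_second hlt hg hg' hg'')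
      (sq_nonneg _)).trans_eq ?_)
  simp only [Pi.pow_apply]
  ring

end Interpolation

theorem differentiableAt_linInterp {N : ℕ} (hN : 0 < N) (g : ℝ → ℝ) {x : ℝ} (hx : Irrational x) :
    DifferentiableAt ℝ (linInterp N g) x := by
  have : linInterp N g = fun x => ∑ i ∈ range (N + 1), g ((i : ℝ) / N) * hat N i x := rfl
  rw [this]
  exact DifferentiableAt.fun_sum fun i _ => (differentiableAt_hat hN i hx).const_mul _

theorem ae_irrational : ∀ᵐ x : ℝ, Irrational x :=
  (Set.countable_range ((↑) : ℚ → ℝ)).ae_notMem volume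

/-- The one-dimensional slice of the two-scale interpolation error estimate. -/
theorem integral_deriv_slice_sq_le {N σ : ℕ} (hN : 0 < N) (hσ : 0 < σ) (hσN : σ ≤ N)
    {U U' U'' Z Z' Z'' R R' W : ℝ → ℝ}
    (hU : ∀ x, HasDerivAt U (U' x) x) (hU' : ∀ x, HasDerivAt U' (U'' x) x) (hU'' : Continuous U'')
    (hZ : ∀ x, HasDerivAt Z (Z' x) x) (hZ' : ∀ x, HasDerivAt Z' (Z'' x) x) (hZ'' : Continuous Z'')
    (hR : ∀ x, HasDerivAt R (R' x) x) (hR' : Continuous R')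
    (hW : ∀ x, W x = (Z x - linInterp σ Z x) + linInterp σ R x + (U x - linInterp N U x)
      - (Z x - linInterp N Z x)) :
    ∫ x in (0 : ℝ)..1, deriv W x ^ 2 ≤ ∫ x in (0 : ℝ)..1,
      (8 * (σ : ℝ)⁻¹ ^ 2 * Z'' x ^ 2 + 4 * R' x ^ 2 + 4 * (N : ℝ)⁻¹ ^ 2 * U'' x ^ 2) := by
  obtain ⟨i1, h1⟩ := integral_deriv_sub_linInterp_sq_le hσ hZ hZ' hZ''
  obtain ⟨i2, h2⟩ := integral_deriv_linInterp_sq_le hσ hR hR'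
  obtain ⟨i3, h3⟩ := integral_deriv_sub_linInterp_sq_le hN hU hU' hU''
  obtain ⟨i4, h4⟩ := integral_deriv_sub_linInterp_sq_le hN hZ hZ' hZ''
  have hWd : ∀ x, Irrational x → deriv W x = (Z' x - deriv (linInterp σ Z) x)
      + deriv (linInterp σ R) x + (U' x - deriv (linInterp N U) x)
      - (Z' x - deriv (linInterp N Z) x) := by
    intro x hx
    rw [show W = _ from funext hW]
    exact (((((hZ x).sub (differentiableAt_linInterp hσ Z hx).hasDerivAt).add
      (differentiableAt_linInterp hσ R hx).hasDerivAt).add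
      ((hU x).sub (differentiableAt_linInterp hN U hx).hasDerivAt)).sub
      ((hZ x).sub (differentiableAt_linInterp hN Z hx).hasDerivAt)).deriv
  have step : ∫ x in (0 : ℝ)..1, deriv W x ^ 2 ≤ ∫ x in (0 : ℝ)..1,
      (4 * (Z' x - deriv (linInterp σ Z) x) ^ 2 + 4 * deriv (linInterp σ R) x ^ 2
        + 4 * (U' x - deriv (linInterp N U) x) ^ 2
        + 4 * (Z' x - deriv (linInterp N Z) x) ^ 2) := by
    rw [intervalIntegral.integral_of_le zero_le_one, intervalIntegral.integral_of_le zero_le_one]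
    refine integral_mono_of_nonneg (Filter.Eventually.of_forall fun x => sq_nonneg _) ?_ ?_
    · exact ((((i1.const_mul 4).add (i2.const_mul 4)).add (i3.const_mul 4)).add
        (i4.const_mul 4)).1
    · filter_upwards [ae_restrict_of_ae ae_irrational] with x hx
      rw [hWd x hx]
      set A := Z' x - deriv (linInterp σ Z) x
      set B := deriv (linInterp σ R) x
      set C := U' x - deriv (linInterp N U) x
      set D := Z' x - deriv (linInterp N Z) x
      nlinarith [sq_nonneg (A - B), sq_nonneg (A - C), sq_nonneg (A + D), sq_nonneg (B - C),
        sq_nonneg (B + D), sq_nonneg (C + D)]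
  refine step.trans ?_
  rw [intervalIntegral.integral_add (((i1.const_mul 4).add (i2.const_mul 4)).add
      (i3.const_mul 4)) (i4.const_mul 4),
    intervalIntegral.integral_add ((i1.const_mul 4).add (i2.const_mul 4)) (i3.const_mul 4),
    intervalIntegral.integral_add (i1.const_mul 4) (i2.const_mul 4)]
  have j1 : IntervalIntegrable (fun x => 8 * (σ : ℝ)⁻¹ ^ 2 * Z'' x ^ 2) volume 0 1 :=
    Continuous.intervalIntegrable (by fun_prop) _ _
  have j2 : IntervalIntegrable (fun x => 4 * R' x ^ 2) volume 0 1 :=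
    Continuous.intervalIntegrable (by fun_prop) _ _
  have j3 : IntervalIntegrable (fun x => 4 * (N : ℝ)⁻¹ ^ 2 * U'' x ^ 2) volume 0 1 :=
    Continuous.intervalIntegrable (by fun_prop) _ _
  rw [intervalIntegral.integral_add (j1.add j2) j3, intervalIntegral.integral_add j1 j2]
  simp only [intervalIntegral.integral_const_mul]
  have hle : (N : ℝ)⁻¹ ^ 2 ≤ (σ : ℝ)⁻¹ ^ 2 := by
    have : (0 : ℝ) < σ := by exact_mod_cast hσ
    have : (σ : ℝ) ≤ N := by exact_mod_cast hσN
    gcongr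
  have h0 : 0 ≤ ∫ x in (0 : ℝ)..1, Z'' x ^ 2 :=
    intervalIntegral.integral_nonneg zero_le_one fun x _ => sq_nonneg _
  have := mul_le_mul_of_nonneg_right hle h0
  linarith

/-! ### Partial derivatives of smooth functions -/

theorem hasDerivAt_fst {u : ℝ × ℝ → ℝ} (hu : Differentiable ℝ u) (p : ℝ × ℝ) :
    HasDerivAt (fun x => u (x, p.2)) (fderiv ℝ u p (1, 0)) p.1 := by
  have h1 : HasDerivAt (fun x : ℝ => (x, p.2)) ((1 : ℝ), (0 : ℝ)) p.1 :=
    (hasDerivAt_id p.1).prodMk (hasDerivAt_const p.1 p.2)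
  exact (hu (p.1, p.2)).hasFDerivAt.comp_hasDerivAt p.1 h1

theorem pderivX_eq_fderiv {u : ℝ × ℝ → ℝ} (hu : Differentiable ℝ u) (p : ℝ × ℝ) :
    pderivX u p = fderiv ℝ u p (1, 0) :=
  (hasDerivAt_fst hu p).deriv

theorem hasDerivAt_pderivX {u : ℝ × ℝ → ℝ} (hu : Differentiable ℝ u) (x y : ℝ) :
    HasDerivAt (fun t => u (t, y)) (pderivX u (x, y)) x := by
  rw [pderivX_eq_fderiv hu]
  exact hasDerivAt_fst hu (x, y)

theorem pderivY_eq_fderiv {u : ℝ × ℝ → ℝ} (hu : Differentiable ℝ u) (p : ℝ × ℝ) :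
    pderivY u p = fderiv ℝ u p (0, 1) := by
  have h1 : HasDerivAt (fun y : ℝ => (p.1, y)) ((0 : ℝ), (1 : ℝ)) p.2 :=
    (hasDerivAt_const p.2 p.1).prodMk (hasDerivAt_id p.2)
  exact ((hu (p.1, p.2)).hasFDerivAt.comp_hasDerivAt p.2 h1).deriv

theorem hasDerivAt_pderivY {u : ℝ × ℝ → ℝ} (hu : Differentiable ℝ u) (x y : ℝ) :
    HasDerivAt (fun t => u (x, t)) (pderivY u (x, y)) y :=
  (hu.comp ((differentiable_const x).prodMk differentiable_id) y).hasDerivAt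

theorem ContDiff.pderivX {u : ℝ × ℝ → ℝ} {n : ℕ} (hu : ContDiff ℝ (n + 1 : ℕ) u) :
    ContDiff ℝ n (pderivX u) := by
  rw [funext (pderivX_eq_fderiv (hu.differentiable (by simp)))]
  exact (hu.fderiv_right (m := n) (by norm_cast)).clm_apply contDiff_const

theorem ContDiff.pderivY {u : ℝ × ℝ → ℝ} {n : ℕ} (hu : ContDiff ℝ (n + 1 : ℕ) u) :
    ContDiff ℝ n (pderivY u) := by
  rw [funext (pderivY_eq_fderiv (hu.differentiable (by simp)))]
  exact (hu.fderiv_right (m := n) (by norm_cast)).clm_apply contDiff_const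

theorem pderivX_pderivY_comm {u : ℝ × ℝ → ℝ} (hu : ContDiff ℝ 2 u) :
    pderivX (pderivY u) = pderivY (pderivX u) := by
  have hd : Differentiable ℝ u := hu.differentiable (by simp)
  have hf : Differentiable ℝ (fderiv ℝ u) :=
    (hu.fderiv_right (m := 1) (by norm_num)).differentiable (by simp)
  funext p
  rw [pderivX_eq_fderiv ((hu : ContDiff ℝ (1 + 1 : ℕ) u).pderivY.differentiable (by simp)),
    pderivY_eq_fderiv ((hu : ContDiff ℝ (1 + 1 : ℕ) u).pderivX.differentiable (by simp)),
    funext (pderivX_eq_fderiv hd), funext (pderivY_eq_fderiv hd),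
    fderiv_clm_apply (hf p) (differentiableAt_const _),
    fderiv_clm_apply (hf p) (differentiableAt_const _)]
  simpa using second_derivative_symmetric (fun y => (hd y).hasFDerivAt) (hf p).hasFDerivAt
    ((1 : ℝ), (0 : ℝ)) ((0 : ℝ), (1 : ℝ))

theorem uxxyy_eq {u : ℝ × ℝ → ℝ} (hu : ContDiff ℝ 4 u) :
    uxxyy u = pderivY (pderivY (pderivX (pderivX u))) := by
  have h4 : ContDiff ℝ (3 + 1 : ℕ) u := hu
  have hX : ContDiff ℝ (2 + 1 : ℕ) (pderivX u) := h4.pderivX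
  have hY : ContDiff ℝ (2 + 1 : ℕ) (pderivY u) := h4.pderivY
  have hYX : ContDiff ℝ 2 (pderivY (pderivX u)) := hX.pderivY
  unfold uxxyy
  rw [pderivX_pderivY_comm (hY.of_le (by norm_num)), pderivX_pderivY_comm (hu.of_le (by norm_num)),
    pderivX_pderivY_comm hYX, pderivX_pderivY_comm (hX.of_le (by norm_num))]

/-! ### Integration over the unit square -/

theorem restrict_Omega2 : (volume : Measure (ℝ × ℝ)).restrict Omega2 =
    (volume.restrict (Set.Ioo (0 : ℝ) 1)).prod (volume.restrict (Set.Ioo (0 : ℝ) 1)) := by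
  rw [Measure.prod_restrict]; rfl

instance : IsFiniteMeasure ((volume : Measure (ℝ × ℝ)).restrict Omega2) := by
  rw [restrict_Omega2]; infer_instance

theorem measurableSet_Omega2 : MeasurableSet Omega2 := measurableSet_Ioo.prod measurableSet_Ioo

theorem isCompact_unitSquare : IsCompact unitSquare := isCompact_Icc.prod isCompact_Icc

theorem Omega2_subset_unitSquare : Omega2 ⊆ unitSquare :=
  Set.prod_mono Set.Ioo_subset_Icc_self Set.Ioo_subset_Icc_self

theorem setIntegral_Ioo_eq_intervalIntegral (f : ℝ → ℝ) :
    ∫ x in Set.Ioo (0 : ℝ) 1, f x = ∫ x in (0 : ℝ)..1, f x := by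
  rw [intervalIntegral.integral_of_le zero_le_one, integral_Ioc_eq_integral_Ioo]

theorem integral_Omega2_comp_swap (F : ℝ × ℝ → ℝ) :
    ∫ p in Omega2, F p.swap = ∫ p in Omega2, F p := by
  rw [restrict_Omega2]
  exact integral_prod_swap F

theorem integrableOn_comp_swap {F : ℝ × ℝ → ℝ} (hF : IntegrableOn F Omega2) :
    IntegrableOn (fun p => F p.swap) Omega2 := by
  rw [IntegrableOn, restrict_Omega2] at *
  exact hF.swap

theorem integral_Omega2_slice {F : ℝ × ℝ → ℝ} (hF : IntegrableOn F Omega2) :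
    ∫ p in Omega2, F p = ∫ y in Set.Ioo (0 : ℝ) 1, ∫ x in (0 : ℝ)..1, F (x, y) := by
  rw [IntegrableOn, restrict_Omega2] at hF
  rw [restrict_Omega2, integral_prod_symm F hF]
  simp only [setIntegral_Ioo_eq_intervalIntegral]

theorem integral_Omega2_mono_slice {F G : ℝ × ℝ → ℝ} (hF : IntegrableOn F Omega2)
    (hG : IntegrableOn G Omega2)
    (h : ∀ y ∈ Set.Ioo (0 : ℝ) 1, ∫ x in (0 : ℝ)..1, F (x, y) ≤ ∫ x in (0 : ℝ)..1, G (x, y)) :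
    ∫ p in Omega2, F p ≤ ∫ p in Omega2, G p := by
  rw [integral_Omega2_slice hF, integral_Omega2_slice hG]
  simp only [← setIntegral_Ioo_eq_intervalIntegral] at h ⊢
  rw [IntegrableOn, restrict_Omega2] at hF hG
  exact setIntegral_mono_on hF.integral_prod_right hG.integral_prod_right measurableSet_Ioo h

theorem integral_Omega2_mono_slice_snd {F G : ℝ × ℝ → ℝ} (hF : IntegrableOn F Omega2)
    (hG : IntegrableOn G Omega2)
    (h : ∀ x ∈ Set.Ioo (0 : ℝ) 1, ∫ y in (0 : ℝ)..1, F (x, y) ≤ ∫ y in (0 : ℝ)..1, G (x, y)) :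
    ∫ p in Omega2, F p ≤ ∫ p in Omega2, G p := by
  rw [← integral_Omega2_comp_swap F, ← integral_Omega2_comp_swap G]
  exact integral_Omega2_mono_slice (integrableOn_comp_swap hF) (integrableOn_comp_swap hG) h

theorem integrableOn_Omega2_of_continuous {F : ℝ × ℝ → ℝ} (hF : Continuous F) :
    IntegrableOn F Omega2 :=
  (hF.continuousOn.integrableOn_compact isCompact_unitSquare).mono_set Omega2_subset_unitSquare

theorem memLp_Omega2_of_continuous {F : ℝ × ℝ → ℝ} (hF : Continuous F) :
    MemLp F 2 (volume.restrict Omega2) :=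
  (memLp_two_iff_integrable_sq hF.aestronglyMeasurable).2
    (integrableOn_Omega2_of_continuous (hF.pow 2))

theorem ae_irrational_fst : ∀ᵐ p : ℝ × ℝ ∂(volume.restrict Omega2), Irrational p.1 :=
  ae_restrict_of_ae (Measure.quasiMeasurePreserving_fst.ae ae_irrational)

theorem ae_irrational_snd : ∀ᵐ p : ℝ × ℝ ∂(volume.restrict Omega2), Irrational p.2 :=
  ae_restrict_of_ae (Measure.quasiMeasurePreserving_snd.ae ae_irrational)

/-! ### Functions that are piecewise smooth in the first variable -/

/-- Continuous functions whose `x`-derivative exists at all irrational `x` and is bounded on the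
unit square. All mesh points being rational, this covers the smooth functions and the finite
element functions. -/
structure XRegular (v : ℝ × ℝ → ℝ) : Prop where
  continuous : Continuous v
  differentiableAt : ∀ x y, Irrational x → DifferentiableAt ℝ (fun t => v (t, y)) x
  bounded : ∃ M, ∀ x ∈ Set.Icc (0 : ℝ) 1, ∀ y ∈ Set.Icc (0 : ℝ) 1, Irrational x →
    |pderivX v (x, y)| ≤ M

theorem pderivX_add {v w : ℝ × ℝ → ℝ} (hv : XRegular v) (hw : XRegular w) {p : ℝ × ℝ}
    (hp : Irrational p.1) : pderivX (v + w) p = pderivX v p + pderivX w p :=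
  deriv_add (hv.differentiableAt _ _ hp) (hw.differentiableAt _ _ hp)

theorem pderivX_sub {v w : ℝ × ℝ → ℝ} (hv : XRegular v) (hw : XRegular w) {p : ℝ × ℝ}
    (hp : Irrational p.1) : pderivX (v - w) p = pderivX v p - pderivX w p :=
  deriv_sub (hv.differentiableAt _ _ hp) (hw.differentiableAt _ _ hp)

theorem pderivX_smul (c : ℝ) (v : ℝ × ℝ → ℝ) (p : ℝ × ℝ) :
    pderivX (c • v) p = c * pderivX v p :=
  deriv_const_mul_field c

namespace XRegular

variable {v w : ℝ × ℝ → ℝ}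

theorem add (hv : XRegular v) (hw : XRegular w) : XRegular (v + w) := by
  refine ⟨hv.continuous.add hw.continuous, fun x y hx =>
    (hv.differentiableAt x y hx).add (hw.differentiableAt x y hx), ?_⟩
  obtain ⟨M, hM⟩ := hv.bounded
  obtain ⟨M', hM'⟩ := hw.bounded
  refine ⟨M + M', fun x hx y hy hxi => ?_⟩
  rw [pderivX_add hv hw hxi]
  exact (abs_add_le _ _).trans (add_le_add (hM x hx y hy hxi) (hM' x hx y hy hxi))

theorem smul (c : ℝ) (hv : XRegular v) : XRegular (c • v) := by
  refine ⟨hv.continuous.const_smul c, fun x y hx =>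
    (hv.differentiableAt x y hx).const_mul c, ?_⟩
  obtain ⟨M, hM⟩ := hv.bounded
  refine ⟨|c| * M, fun x hx y hy hxi => ?_⟩
  rw [pderivX_smul, abs_mul]
  exact mul_le_mul_of_nonneg_left (hM x hx y hy hxi) (abs_nonneg _)

theorem sub (hv : XRegular v) (hw : XRegular w) : XRegular (v - w) := by
  have h : v - w = v + (-1 : ℝ) • w := by simp [sub_eq_add_neg]
  rw [h]
  exact hv.add (hw.smul _)

theorem of_contDiff (hv : ContDiff ℝ 1 v) : XRegular v := by
  have hd : Differentiable ℝ v := hv.differentiable (by simp)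
  have hc : Continuous (pderivX v) := ((hv : ContDiff ℝ (0 + 1 : ℕ) v).pderivX).continuous
  refine ⟨hv.continuous, fun x y _ => (hasDerivAt_pderivX hd x y).differentiableAt, ?_⟩
  obtain ⟨M, hM⟩ := isCompact_unitSquare.exists_bound_of_continuousOn hc.continuousOn
  exact ⟨M, fun x hx y hy _ => hM (x, y) ⟨hx, hy⟩⟩

theorem hat_mul_hat {N M : ℕ} (hN : 0 < N) (hM : 0 < M) (i j : ℕ) :
    XRegular fun p => hat N i p.1 * hat M j p.2 := by
  refine ⟨((continuous_hat hN i).comp continuous_fst).mul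
    ((continuous_hat hM j).comp continuous_snd), fun x y hx =>
    (differentiableAt_hat hN i hx).mul_const (hat M j y), N, fun x _ y _ _ => ?_⟩
  have : pderivX (fun p => hat N i p.1 * hat M j p.2) (x, y) = deriv (hat N i) x * hat M j y :=
    deriv_mul_const_field (hat M j y)
  rw [this, abs_mul]
  calc |deriv (hat N i) x| * |hat M j y| ≤ N * 1 :=
        mul_le_mul (abs_deriv_hat_le hN i x) (abs_hat_le_one hM j y) (abs_nonneg _)
          (Nat.cast_nonneg N)
    _ = N := mul_one _

theorem measurable_pderivX (hv : XRegular v) : Measurable (pderivX v) := by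
  have h : Continuous (Function.uncurry fun y x => v (x, y)) :=
    hv.continuous.comp continuous_swap
  exact (measurable_deriv_with_param h).comp measurable_swap

theorem memLp_pderivX (hv : XRegular v) : MemLp (pderivX v) 2 (volume.restrict Omega2) := by
  obtain ⟨M, hM⟩ := hv.bounded
  refine MemLp.of_bound hv.measurable_pderivX.aestronglyMeasurable M ?_
  filter_upwards [ae_irrational_fst, ae_restrict_mem measurableSet_Omega2] with p hp hp'
  have := Omega2_subset_unitSquare hp'
  exact hM p.1 this.1 p.2 this.2 hp

theorem memLp_slice (hv : XRegular v) {y : ℝ} (hy : y ∈ Set.Icc (0 : ℝ) 1) :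
    MemLp (fun x => pderivX v (x, y)) 2 (volume.restrict (Set.Ioc (0 : ℝ) 1)) := by
  obtain ⟨M, hM⟩ := hv.bounded
  refine MemLp.of_bound
    (hv.measurable_pderivX.comp measurable_prodMk_right).aestronglyMeasurable M ?_
  filter_upwards [ae_restrict_of_ae ae_irrational, ae_restrict_mem measurableSet_Ioc] with x hx hx'
  exact hM x (Set.Ioc_subset_Icc_self hx') y hy hx

theorem intervalIntegrable_slice (hv : XRegular v) {y : ℝ} (hy : y ∈ Set.Icc (0 : ℝ) 1) :
    IntervalIntegrable (fun x => pderivX v (x, y)) volume 0 1 :=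
  (intervalIntegrable_iff_integrableOn_Ioc_of_le zero_le_one).2
    ((hv.memLp_slice hy).integrable (by norm_num))

theorem intervalIntegrable_slice_sq (hv : XRegular v) {y : ℝ} (hy : y ∈ Set.Icc (0 : ℝ) 1) :
    IntervalIntegrable (fun x => pderivX v (x, y) ^ 2) volume 0 1 :=
  (intervalIntegrable_iff_integrableOn_Ioc_of_le zero_le_one).2
    ((hv.memLp_slice hy).integrable_sq)

/-- Poincaré's inequality for functions vanishing on the left side of the square. -/
theorem integral_sq_le (hv : XRegular v) (h0 : ∀ y ∈ Set.Icc (0 : ℝ) 1, v (0, y) = 0) :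
    ∫ p in Omega2, v p ^ 2 ≤ ∫ p in Omega2, pderivX v p ^ 2 := by
  refine integral_Omega2_mono_slice (integrableOn_Omega2_of_continuous (hv.continuous.pow 2))
    hv.memLp_pderivX.integrable_sq fun y hy => ?_
  have hy' := Set.Ioo_subset_Icc_self hy
  have hc : Continuous fun x => v (x, y) := by
    have := hv.continuous
    fun_prop
  set J := ∫ x in (0 : ℝ)..1, pderivX v (x, y) ^ 2 with hJ
  have hpt : ∀ x ∈ Set.Icc (0 : ℝ) 1, v (x, y) ^ 2 ≤ J := by
    intro x hx
    have hsub : Set.uIcc (0 : ℝ) x ⊆ Set.uIcc 0 1 := by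
      rw [Set.uIcc_of_le hx.1, Set.uIcc_of_le zero_le_one]
      exact Set.Icc_subset_Icc le_rfl hx.2
    have i1 := (hv.intervalIntegrable_slice hy').mono_set hsub
    have i2 := (hv.intervalIntegrable_slice_sq hy').mono_set hsub
    have hFTC := integral_eq_of_hasDerivAt_off_countable (a := 0) (b := x) (fun x => v (x, y))
      (fun x => pderivX v (x, y)) (Set.countable_range ((↑) : ℚ → ℝ)) hc.continuousOn
      (fun t ht => (hv.differentiableAt t y ht.2).hasDerivAt) i1
    rw [h0 y hy', sub_zero] at hFTC
    rw [← hFTC]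
    refine (sq_intervalIntegral_le hx.1 i1 i2).trans ?_
    have hmono : ∫ t in (0 : ℝ)..x, pderivX v (t, y) ^ 2 ≤ J :=
      intervalIntegral.integral_mono_interval le_rfl hx.1 hx.2
        (Filter.Eventually.of_forall fun x => sq_nonneg _) (hv.intervalIntegrable_slice_sq hy')
    have hnn : 0 ≤ ∫ t in (0 : ℝ)..x, pderivX v (t, y) ^ 2 :=
      intervalIntegral.integral_nonneg hx.1 fun x _ => sq_nonneg _
    calc (x - 0) * ∫ t in (0 : ℝ)..x, pderivX v (t, y) ^ 2
        ≤ 1 * ∫ t in (0 : ℝ)..x, pderivX v (t, y) ^ 2 :=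
          mul_le_mul_of_nonneg_right (by linarith [hx.2]) hnn
      _ ≤ J := by linarith
  calc ∫ x in (0 : ℝ)..1, v (x, y) ^ 2 ≤ ∫ _ in (0 : ℝ)..1, J :=
        intervalIntegral.integral_mono_on zero_le_one ((hc.pow 2).intervalIntegrable _ _)
          (by simp) hpt
    _ = J := by simp

/-- Integration by parts in the first variable. -/
theorem integral_pderivX_mul (hv : XRegular v) {u : ℝ × ℝ → ℝ} (hu : ContDiff ℝ 2 u)
    (h0 : ∀ y, v (0, y) = 0) (h1 : ∀ y, v (1, y) = 0) :
    ∫ p in Omega2, pderivX u p * pderivX v p = ∫ p in Omega2, -(pderivX (pderivX u) p * v p) := by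
  have hX : ContDiff ℝ (0 + 1 : ℕ) (pderivX u) := (hu : ContDiff ℝ (1 + 1 : ℕ) u).pderivX
  have hXX : Continuous (pderivX (pderivX u)) := hX.pderivX.continuous
  have hXc := hX.continuous
  have hvc := hv.continuous
  have i1 : Integrable (fun p => pderivX u p * pderivX v p) (volume.restrict Omega2) :=
    (memLp_Omega2_of_continuous hXc).integrable_mul hv.memLp_pderivX
  have i2 : IntegrableOn (fun p => -(pderivX (pderivX u) p * v p)) Omega2 :=
    integrableOn_Omega2_of_continuous (by fun_prop)
  rw [integral_Omega2_slice i1, integral_Omega2_slice i2]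
  refine setIntegral_congr_fun measurableSet_Ioo fun y hy => ?_
  have hy' := Set.Ioo_subset_Icc_self hy
  have j1 : IntervalIntegrable (fun x => pderivX u (x, y) * pderivX v (x, y)) volume 0 1 :=
    (hv.intervalIntegrable_slice hy').continuousOn_mul
      (hXc.comp (by fun_prop : Continuous fun x : ℝ => (x, y))).continuousOn
  have j2 : IntervalIntegrable (fun x => pderivX (pderivX u) (x, y) * v (x, y)) volume 0 1 :=
    Continuous.intervalIntegrable (by fun_prop) _ _
  have hFTC := integral_eq_of_hasDerivAt_off_countable (a := 0) (b := 1)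
    (fun x => pderivX u (x, y) * v (x, y))
    (fun x => pderivX (pderivX u) (x, y) * v (x, y) + pderivX u (x, y) * pderivX v (x, y))
    (Set.countable_range ((↑) : ℚ → ℝ))
    (by fun_prop : Continuous fun x : ℝ => pderivX u (x, y) * v (x, y)).continuousOn
    (fun t ht => (hasDerivAt_pderivX (hX.differentiable (by simp)) t y).mul
      (hv.differentiableAt t y ht.2).hasDerivAt) (j2.add j1)
  rw [intervalIntegral.integral_add j2 j1, h0, h1] at hFTC
  simp only [mul_zero, sub_zero] at hFTC
  simp only [intervalIntegral.integral_neg]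
  linarith

end XRegular

/-! ### The energy form on finite element functions -/

/-- Functions that are piecewise smooth in both variables. -/
structure Regular (v : ℝ × ℝ → ℝ) : Prop where
  fst : XRegular v
  snd : XRegular (v ∘ Prod.swap)

theorem integral_add_add {α : Type*} [MeasurableSpace α] {μ : Measure α} {f g h : α → ℝ}
    (hf : Integrable f μ) (hg : Integrable g μ) (hh : Integrable h μ) :
    ∫ a, (f a + g a + h a) ∂μ = ∫ a, f a ∂μ + ∫ a, g a ∂μ + ∫ a, h a ∂μ := by
  rw [← integral_add hf hg]
  exact integral_add (hf.add hg) hh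

theorem pderivY_sub {v w : ℝ × ℝ → ℝ} (hv : XRegular (v ∘ Prod.swap))
    (hw : XRegular (w ∘ Prod.swap)) {p : ℝ × ℝ} (hp : Irrational p.2) :
    pderivY (v - w) p = pderivY v p - pderivY w p :=
  pderivX_sub (p := p.swap) hv hw hp

namespace Regular

variable {v w : ℝ × ℝ → ℝ}

theorem add (hv : Regular v) (hw : Regular w) : Regular (v + w) :=
  ⟨hv.fst.add hw.fst, hv.snd.add hw.snd⟩

theorem sub (hv : Regular v) (hw : Regular w) : Regular (v - w) :=
  ⟨hv.fst.sub hw.fst, hv.snd.sub hw.snd⟩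

theorem smul (c : ℝ) (hv : Regular v) : Regular (c • v) :=
  ⟨hv.fst.smul c, hv.snd.smul c⟩

theorem of_contDiff (hv : ContDiff ℝ 1 v) : Regular v :=
  ⟨XRegular.of_contDiff hv, XRegular.of_contDiff (hv.comp (contDiff_snd.prodMk contDiff_fst))⟩

theorem hat_mul_hat {N M : ℕ} (hN : 0 < N) (hM : 0 < M) (i j : ℕ) :
    Regular fun p => hat N i p.1 * hat M j p.2 := by
  refine ⟨XRegular.hat_mul_hat hN hM i j, ?_⟩
  convert XRegular.hat_mul_hat hM hN j i using 2 with p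
  exact mul_comm _ _

theorem memLp_pderivY (hv : Regular v) : MemLp (pderivY v) 2 (volume.restrict Omega2) := by
  have h := hv.snd.memLp_pderivX
  rw [restrict_Omega2] at h ⊢
  exact h.comp_measurePreserving Measure.measurePreserving_swap

theorem integrable_pderivX_mul (hv : Regular v) (hw : Regular w) :
    Integrable (fun p => pderivX v p * pderivX w p) (volume.restrict Omega2) :=
  hv.fst.memLp_pderivX.integrable_mul hw.fst.memLp_pderivX

theorem integrable_pderivY_mul (hv : Regular v) (hw : Regular w) :
    Integrable (fun p => pderivY v p * pderivY w p) (volume.restrict Omega2) :=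
  hv.memLp_pderivY.integrable_mul hw.memLp_pderivY

theorem integrable_mul (hv : Regular v) (hw : Regular w) :
    Integrable (fun p => v p * w p) (volume.restrict Omega2) :=
  (memLp_Omega2_of_continuous hv.fst.continuous).integrable_mul
    (memLp_Omega2_of_continuous hw.fst.continuous)

theorem integrable_Bform (hv : Regular v) (hw : Regular w) :
    Integrable (fun p => pderivX v p * pderivX w p + pderivY v p * pderivY w p + v p * w p)
      (volume.restrict Omega2) :=
  ((hv.integrable_pderivX_mul hw).add (hv.integrable_pderivY_mul hw)).add (hv.integrable_mul hw)

theorem Bform_sub_left {z : ℝ × ℝ → ℝ} (hv : Regular v) (hw : Regular w) (hz : Regular z) :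
    Bform (v - w) z = Bform v z - Bform w z := by
  unfold Bform
  rw [← integral_sub (hv.integrable_Bform hz) (hw.integrable_Bform hz)]
  refine integral_congr_ae ?_
  filter_upwards [ae_irrational_fst, ae_irrational_snd] with p h1 h2
  rw [pderivX_sub hv.fst hw.fst h1, pderivY_sub hv.snd hw.snd h2, Pi.sub_apply]
  ring

theorem energyNorm_eq (v : ℝ × ℝ → ℝ) : energyNorm v = Real.sqrt (Bform v v) := by
  unfold energyNorm Bform
  simp only [sq]

/-- A function orthogonal to `d` in the energy form has minimal energy along `d`. -/
theorem Bform_self_le_of_orthogonal {e d : ℝ × ℝ → ℝ} (he : Regular e) (hd : Regular d)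
    (h : Bform e d = 0) : Bform e e ≤ Bform (e - d) (e - d) := by
  have hkey : Bform e e - 2 * Bform e d ≤ Bform (e - d) (e - d) := by
    unfold Bform
    rw [← integral_const_mul, ← integral_sub (he.integrable_Bform he)
      ((he.integrable_Bform hd).const_mul 2)]
    refine integral_mono_ae ((he.integrable_Bform he).sub ((he.integrable_Bform hd).const_mul 2))
      ((he.sub hd).integrable_Bform (he.sub hd)) ?_
    filter_upwards [ae_irrational_fst, ae_irrational_snd] with p h1 h2
    rw [pderivX_sub he.fst hd.fst h1, pderivY_sub he.snd hd.snd h2, Pi.sub_apply]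
    nlinarith [sq_nonneg (pderivX d p), sq_nonneg (pderivY d p), sq_nonneg (d p)]
  linarith

end Regular

/-- Green's formula for a test function vanishing on the boundary. -/
theorem Bform_eq_integral {u v f : ℝ × ℝ → ℝ} (hu : ContDiff ℝ 2 u) (hv : Regular v)
    (h0 : ∀ t ∉ Set.Ioo (0 : ℝ) 1, ∀ s, v (t, s) = 0 ∧ v (s, t) = 0)
    (hf : ∀ p ∈ Omega2, -(pderivX (pderivX u) p + pderivY (pderivY u) p) + u p = f p) :
    Bform u v = ∫ p in Omega2, f p * v p := by
  have hur : Regular u := Regular.of_contDiff (hu.of_le (by norm_num))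
  have hX : ∫ p in Omega2, pderivX u p * pderivX v p
      = ∫ p in Omega2, -(pderivX (pderivX u) p * v p) :=
    hv.fst.integral_pderivX_mul hu (fun y => (h0 0 (by simp) y).1) fun y => (h0 1 (by simp) y).1
  have hY : ∫ p in Omega2, pderivY u p * pderivY v p
      = ∫ p in Omega2, -(pderivY (pderivY u) p * v p) := by
    have hus : ContDiff ℝ 2 (u ∘ Prod.swap) := hu.comp (contDiff_snd.prodMk contDiff_fst)
    have h := hv.snd.integral_pderivX_mul hus (fun y => (h0 0 (by simp) y).2)
      fun y => (h0 1 (by simp) y).2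
    rw [← integral_Omega2_comp_swap, ← integral_Omega2_comp_swap
      (fun p => -(pderivX (pderivX (u ∘ Prod.swap)) p * (v ∘ Prod.swap) p))] at h
    exact h
  have hvc := hv.fst.continuous
  have hXX : Continuous (pderivX (pderivX u)) :=
    ((hu : ContDiff ℝ (1 + 1 : ℕ) u).pderivX : ContDiff ℝ (0 + 1 : ℕ) _).pderivX.continuous
  have hYY : Continuous (pderivY (pderivY u)) :=
    ((hu : ContDiff ℝ (1 + 1 : ℕ) u).pderivY : ContDiff ℝ (0 + 1 : ℕ) _).pderivY.continuous
  have i1 : IntegrableOn (fun p => -(pderivX (pderivX u) p * v p)) Omega2 :=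
    integrableOn_Omega2_of_continuous (by fun_prop)
  have i2 : IntegrableOn (fun p => -(pderivY (pderivY u) p * v p)) Omega2 :=
    integrableOn_Omega2_of_continuous (by fun_prop)
  unfold Bform
  rw [integral_add_add (hur.integrable_pderivX_mul hv) (hur.integrable_pderivY_mul hv)
    (hur.integrable_mul hv), hX, hY, ← integral_add_add i1 i2 (hur.integrable_mul hv)]
  refine setIntegral_congr_fun measurableSet_Omega2 fun p hp => ?_
  simp only [← hf p hp]
  ring

/-! ### The two-scale space -/

theorem regular_of_mem_twoScaleSpace {N σ : ℕ} (hN : 0 < N) (hσ : 0 < σ) {v : ℝ × ℝ → ℝ}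
    (hv : v ∈ twoScaleSpace N σ) :
    Regular v ∧ ∀ t ∉ Set.Ioo (0 : ℝ) 1, ∀ s, v (t, s) = 0 ∧ v (s, t) = 0 := by
  unfold twoScaleSpace at hv
  induction hv using Submodule.span_induction with
  | mem x hx =>
    rcases hx with ⟨i, hi, j, hj, rfl⟩ | ⟨i, hi, j, hj, rfl⟩
    · exact ⟨Regular.hat_mul_hat hN hσ i j, fun t ht s =>
        ⟨by simp [hat_eq_zero_of_notMem hi ht], by simp [hat_eq_zero_of_notMem hj ht]⟩⟩
    · exact ⟨Regular.hat_mul_hat hσ hN i j, fun t ht s =>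
        ⟨by simp [hat_eq_zero_of_notMem hi ht], by simp [hat_eq_zero_of_notMem hj ht]⟩⟩
  | zero => exact ⟨Regular.of_contDiff contDiff_const, fun t _ s => by simp⟩
  | add x y _ _ hx hy =>
    exact ⟨hx.1.add hy.1, fun t ht s => by simp [hx.2 t ht s, hy.2 t ht s]⟩
  | smul c x _ hx => exact ⟨hx.1.smul c, fun t ht s => by simp [hx.2 t ht s]⟩

theorem interp_mem {V : Submodule ℝ (ℝ × ℝ → ℝ)} {N M : ℕ} (hN : 0 < N) (hM : 0 < M)
    {u : ℝ × ℝ → ℝ} (hu : VanishOnBoundary u)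
    (hV : ∀ i ∈ Finset.Icc 1 (N - 1), ∀ j ∈ Finset.Icc 1 (M - 1),
      (fun p : ℝ × ℝ => hat N i p.1 * hat M j p.2) ∈ V) : interp N M u ∈ V := by
  have hN' : (0 : ℝ) < N := by exact_mod_cast hN
  have hM' : (0 : ℝ) < M := by exact_mod_cast hM
  have heq : interp N M u = ∑ i ∈ range (N + 1), ∑ j ∈ range (M + 1),
      u ((i : ℝ) / N, (j : ℝ) / M) • fun p : ℝ × ℝ => hat N i p.1 * hat M j p.2 := by
    funext p
    simp only [interp, Finset.sum_apply, Pi.smul_apply, smul_eq_mul, mul_assoc]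
  rw [heq]
  refine Submodule.sum_mem _ fun i hi => Submodule.sum_mem _ fun j hj => ?_
  rw [Finset.mem_range] at hi hj
  have hmem : ((i : ℝ) / N, (j : ℝ) / M) ∈ unitSquare := by
    have h1 : (i : ℝ) ≤ N := by exact_mod_cast Nat.lt_succ_iff.1 hi
    have h2 : (j : ℝ) ≤ M := by exact_mod_cast Nat.lt_succ_iff.1 hj
    exact ⟨⟨by positivity, (div_le_one hN').2 h1⟩, ⟨by positivity, (div_le_one hM').2 h2⟩⟩
  by_cases hin : i ∈ Finset.Icc 1 (N - 1) ∧ j ∈ Finset.Icc 1 (M - 1)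
  · exact Submodule.smul_mem _ _ (hV i hin.1 j hin.2)
  · have hcases : i = 0 ∨ i = N ∨ j = 0 ∨ j = M := by
      simp only [Finset.mem_Icc] at hin
      omega
    rw [hu _ hmem, zero_smul]
    · exact Submodule.zero_mem _
    · rcases hcases with rfl | rfl | rfl | rfl
      · simp
      · exact Or.inr (Or.inl (div_self hN'.ne'))
      · simp
      · exact Or.inr (Or.inr (Or.inr (div_self hM'.ne')))

theorem twoScale_mem {N σ : ℕ} (hN : 0 < N) (hσ : 0 < σ) (hd : σ ∣ N) {u : ℝ × ℝ → ℝ}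
    (hu : VanishOnBoundary u) : twoScale N σ u ∈ twoScaleSpace N σ := by
  have h1 : ∀ i ∈ Finset.Icc 1 (N - 1), ∀ j ∈ Finset.Icc 1 (σ - 1),
      (fun p : ℝ × ℝ => hat N i p.1 * hat σ j p.2) ∈ twoScaleSpace N σ :=
    fun i hi j hj => Submodule.subset_span (Or.inl ⟨i, hi, j, hj, rfl⟩)
  have h2 : ∀ i ∈ Finset.Icc 1 (σ - 1), ∀ j ∈ Finset.Icc 1 (N - 1),
      (fun p : ℝ × ℝ => hat σ i p.1 * hat N j p.2) ∈ twoScaleSpace N σ :=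
    fun i hi j hj => Submodule.subset_span (Or.inr ⟨i, hi, j, hj, rfl⟩)
  have h3 : ∀ i ∈ Finset.Icc 1 (σ - 1), ∀ j ∈ Finset.Icc 1 (σ - 1),
      (fun p : ℝ × ℝ => hat σ i p.1 * hat σ j p.2) ∈ twoScaleSpace N σ := by
    intro i hi j hj
    have heq : (fun p : ℝ × ℝ => hat σ i p.1 * hat σ j p.2) =
        ∑ k ∈ Finset.Icc 1 (N - 1),
          hat σ i ((k : ℝ) / N) • fun p : ℝ × ℝ => hat N k p.1 * hat σ j p.2 := by
      funext p
      rw [hat_refine hN hd hi p.1]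
      simp only [Finset.sum_apply, Pi.smul_apply, smul_eq_mul, mul_assoc, Finset.sum_mul]
    rw [heq]
    exact Submodule.sum_mem _ fun k hk => Submodule.smul_mem _ _ (h1 k hk j hj)
  exact Submodule.sub_mem _ (Submodule.add_mem _ (interp_mem hN hσ hu h1)
    (interp_mem hσ hN hu h2)) (interp_mem hσ hσ hu h3)

/-! ### The two-scale interpolation error -/

/-- The error of piecewise linear interpolation in the second variable. -/
def residualY (M : ℕ) (v : ℝ × ℝ → ℝ) (p : ℝ × ℝ) : ℝ :=
  v p - linInterp M (fun t => v (p.1, t)) p.2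

theorem continuous_residualY {M : ℕ} (hM : 0 < M) {v : ℝ × ℝ → ℝ} (hv : Continuous v) :
    Continuous (residualY M v) := by
  unfold residualY linInterp
  refine hv.sub (continuous_finsetSum _ fun i _ => ?_)
  exact (hv.comp (continuous_fst.prodMk continuous_const)).mul
    ((continuous_hat hM i).comp continuous_snd)

theorem hasDerivAt_residualY (M : ℕ) {v : ℝ × ℝ → ℝ} (hv : Differentiable ℝ v) (y x : ℝ) :
    HasDerivAt (fun x => residualY M v (x, y)) (residualY M (pderivX v) (x, y)) x := by
  unfold residualY linInterp
  exact (hasDerivAt_pderivX hv x y).sub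
    (HasDerivAt.fun_sum fun i _ =>
      (hasDerivAt_pderivX hv x ((i : ℝ) / M)).mul_const (hat M i y))

theorem linInterp_residualY (M K : ℕ) (u : ℝ × ℝ → ℝ) (x y : ℝ) :
    linInterp M (fun t => residualY K u (t, y)) x
      = linInterp M (fun t => u (t, y)) x - interp M K u (x, y) := by
  simp only [linInterp, residualY, interp, sub_mul, Finset.sum_sub_distrib, Finset.sum_mul]
  congr 1
  exact Finset.sum_congr rfl fun i _ => Finset.sum_congr rfl fun j _ => by ring

theorem integral_pderivX_twoScale_error_sq_le {N σ : ℕ} (hN : 0 < N) (hσ : 0 < σ) (hσN : σ ≤ N)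
    {u : ℝ × ℝ → ℝ} (hu : ContDiff ℝ 4 u) (hreg : XRegular (u - twoScale N σ u)) :
    ∫ p in Omega2, pderivX (u - twoScale N σ u) p ^ 2 ≤
      8 * ((σ : ℝ) ^ 3)⁻¹ ^ 2 * (∫ p in Omega2, uxxyy u p ^ 2)
        + 4 * (N : ℝ)⁻¹ ^ 2 * (∫ p in Omega2, pderivX (pderivY u) p ^ 2)
        + 4 * (N : ℝ)⁻¹ ^ 2 * (∫ p in Omega2, pderivX (pderivX u) p ^ 2) := by
  have h4 : ContDiff ℝ (3 + 1 : ℕ) u := hu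
  have hX : ContDiff ℝ (2 + 1 : ℕ) (pderivX u) := h4.pderivX
  have hXX : ContDiff ℝ (1 + 1 : ℕ) (pderivX (pderivX u)) := hX.pderivX
  have hXXY : ContDiff ℝ (0 + 1 : ℕ) (pderivY (pderivX (pderivX u))) := hXX.pderivY
  have hXXYY : Continuous (pderivY (pderivY (pderivX (pderivX u)))) := hXXY.pderivY.continuous
  have hXY : Continuous (pderivY (pderivX u)) := hX.pderivY.continuous
  have hud : Differentiable ℝ u := h4.differentiable (by simp)
  have hXd : Differentiable ℝ (pderivX u) := hX.differentiable (by simp)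
  have hXXd : Differentiable ℝ (pderivX (pderivX u)) := hXX.differentiable (by simp)
  have hXXYd : Differentiable ℝ (pderivY (pderivX (pderivX u))) := hXXY.differentiable (by simp)
  have hXXc := hXX.continuous
  have hZc := continuous_residualY hσ hXX.continuous
  have hRc := continuous_residualY hN hX.continuous
  have hslice : ∫ p in Omega2, pderivX (u - twoScale N σ u) p ^ 2 ≤
      ∫ p in Omega2, (8 * (σ : ℝ)⁻¹ ^ 2 * residualY σ (pderivX (pderivX u)) p ^ 2
        + 4 * residualY N (pderivX u) p ^ 2
        + 4 * (N : ℝ)⁻¹ ^ 2 * pderivX (pderivX u) p ^ 2) := by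
    refine integral_Omega2_mono_slice hreg.memLp_pderivX.integrable_sq
      (integrableOn_Omega2_of_continuous (by fun_prop)) fun y _ => ?_
    refine integral_deriv_slice_sq_le (W := fun x => (u - twoScale N σ u) (x, y)) hN hσ hσN
      (fun x => hasDerivAt_pderivX hud x y) (fun x => hasDerivAt_pderivX hXd x y) (by fun_prop)
      (hasDerivAt_residualY σ hud y) (hasDerivAt_residualY σ hXd y) (by fun_prop)
      (hasDerivAt_residualY N hud y) (by fun_prop) fun x => ?_
    rw [linInterp_residualY, linInterp_residualY, linInterp_residualY]
    simp only [Pi.sub_apply, twoScale]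
    ring
  have hZ : ∫ p in Omega2, residualY σ (pderivX (pderivX u)) p ^ 2 ≤
      ∫ p in Omega2, (σ : ℝ)⁻¹ ^ 4 * pderivY (pderivY (pderivX (pderivX u))) p ^ 2 := by
    refine integral_Omega2_mono_slice_snd (integrableOn_Omega2_of_continuous (by fun_prop))
      (integrableOn_Omega2_of_continuous (by fun_prop)) fun x _ => ?_
    rw [intervalIntegral.integral_const_mul]
    exact integral_sub_linInterp_sq_le_second hσ (fun y => hasDerivAt_pderivY hXXd x y)
      (fun y => hasDerivAt_pderivY hXXYd x y) (by fun_prop)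
  have hR : ∫ p in Omega2, residualY N (pderivX u) p ^ 2 ≤
      ∫ p in Omega2, (N : ℝ)⁻¹ ^ 2 * pderivY (pderivX u) p ^ 2 := by
    refine integral_Omega2_mono_slice_snd (integrableOn_Omega2_of_continuous (by fun_prop))
      (integrableOn_Omega2_of_continuous (by fun_prop)) fun x _ => ?_
    rw [intervalIntegral.integral_const_mul]
    exact integral_sub_linInterp_sq_le hN (fun y => hasDerivAt_pderivY hXd x y) (by fun_prop)
  rw [integral_const_mul] at hZ hR
  refine hslice.trans ?_
  have i1 : IntegrableOn (fun p => 8 * (σ : ℝ)⁻¹ ^ 2 * residualY σ (pderivX (pderivX u)) p ^ 2)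
    Omega2 := integrableOn_Omega2_of_continuous (by fun_prop)
  have i2 : IntegrableOn (fun p => 4 * residualY N (pderivX u) p ^ 2) Omega2 :=
    integrableOn_Omega2_of_continuous (by fun_prop)
  have i3 : IntegrableOn (fun p => 4 * (N : ℝ)⁻¹ ^ 2 * pderivX (pderivX u) p ^ 2) Omega2 :=
    integrableOn_Omega2_of_continuous (by fun_prop)
  rw [integral_add_add i1 i2 i3, integral_const_mul, integral_const_mul,
    integral_const_mul, uxxyy_eq hu, pderivX_pderivY_comm (hu.of_le (by norm_num))]
  have hZ' := mul_le_mul_of_nonneg_left hZ (by positivity : 0 ≤ 8 * (σ : ℝ)⁻¹ ^ 2)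
  have e : ((σ : ℝ) ^ 3)⁻¹ ^ 2 = (σ : ℝ)⁻¹ ^ 2 * (σ : ℝ)⁻¹ ^ 4 := by
    rw [← inv_pow]; ring
  rw [e]
  linarith

theorem twoScale_comp_swap (N σ : ℕ) (u : ℝ × ℝ → ℝ) :
    twoScale N σ u ∘ Prod.swap = twoScale N σ (u ∘ Prod.swap) := by
  have h : ∀ (K M : ℕ) (p : ℝ × ℝ), interp K M u p.swap = interp M K (u ∘ Prod.swap) p := by
    intro K M p
    unfold interp
    rw [Finset.sum_comm]
    exact Finset.sum_congr rfl fun i _ => Finset.sum_congr rfl fun j _ => mul_right_comm _ _ _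
  funext p
  simp only [Function.comp_apply, twoScale, h]
  ring

theorem integral_pderivY_twoScale_error_sq_le {N σ : ℕ} (hN : 0 < N) (hσ : 0 < σ) (hσN : σ ≤ N)
    {u : ℝ × ℝ → ℝ} (hu : ContDiff ℝ 4 u)
    (hreg : XRegular ((u - twoScale N σ u) ∘ Prod.swap)) :
    ∫ p in Omega2, pderivY (u - twoScale N σ u) p ^ 2 ≤
      8 * ((σ : ℝ) ^ 3)⁻¹ ^ 2 * (∫ p in Omega2, uxxyy u p ^ 2)
        + 4 * (N : ℝ)⁻¹ ^ 2 * (∫ p in Omega2, pderivX (pderivY u) p ^ 2)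
        + 4 * (N : ℝ)⁻¹ ^ 2 * (∫ p in Omega2, pderivY (pderivY u) p ^ 2) := by
  have hswap : (u - twoScale N σ u) ∘ Prod.swap
      = u ∘ Prod.swap - twoScale N σ (u ∘ Prod.swap) := by
    rw [← twoScale_comp_swap]; rfl
  rw [hswap] at hreg
  have h := integral_pderivX_twoScale_error_sq_le (u := u ∘ Prod.swap) hN hσ hσN
    (hu.comp (contDiff_snd.prodMk contDiff_fst)) hreg
  rw [← hswap] at h
  rw [uxxyy_eq hu, pderivX_pderivY_comm (hu.of_le (by norm_num)),
    ← integral_Omega2_comp_swap (fun p => pderivY (u - twoScale N σ u) p ^ 2),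
    ← integral_Omega2_comp_swap (fun p => pderivY (pderivY (pderivX (pderivX u))) p ^ 2),
    ← integral_Omega2_comp_swap (fun p => pderivY (pderivX u) p ^ 2),
    ← integral_Omega2_comp_swap (fun p => pderivY (pderivY u) p ^ 2)]
  exact h

theorem L2norm_sq (v : ℝ × ℝ → ℝ) : L2norm v ^ 2 = ∫ p in Omega2, v p ^ 2 :=
  Real.sq_sqrt (integral_nonneg fun _ => sq_nonneg _)

theorem L2norm_nonneg (v : ℝ × ℝ → ℝ) : 0 ≤ L2norm v := Real.sqrt_nonneg _

theorem Bform_twoScale_error_le {N σ : ℕ} (hN : 0 < N) (hσ : 0 < σ) (hσN : σ ≤ N)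
    {u : ℝ × ℝ → ℝ} (hu : ContDiff ℝ 4 u) (hreg : Regular (u - twoScale N σ u))
    (h0 : ∀ y ∈ Set.Icc (0 : ℝ) 1, (u - twoScale N σ u) (0, y) = 0) :
    Bform (u - twoScale N σ u) (u - twoScale N σ u) ≤
      (5 * ((N : ℝ)⁻¹ * semi2 u + ((σ : ℝ) ^ 3)⁻¹ * L2norm (uxxyy u))) ^ 2 := by
  have h1 := integral_pderivX_twoScale_error_sq_le hN hσ hσN hu hreg.fst
  have h2 := integral_pderivY_twoScale_error_sq_le hN hσ hσN hu hreg.snd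
  have h3 := hreg.fst.integral_sq_le h0
  have hB : Bform (u - twoScale N σ u) (u - twoScale N σ u) =
      (∫ p in Omega2, pderivX (u - twoScale N σ u) p ^ 2)
      + (∫ p in Omega2, pderivY (u - twoScale N σ u) p ^ 2)
      + ∫ p in Omega2, (u - twoScale N σ u) p ^ 2 := by
    unfold Bform
    rw [integral_add_add (hreg.integrable_pderivX_mul hreg) (hreg.integrable_pderivY_mul hreg)
      (hreg.integrable_mul hreg)]
    simp only [sq]
  simp only [← L2norm_sq] at h1 h2 h3 hB
  rw [hB]
  unfold semi2
  have hA := L2norm_nonneg (pderivX (pderivX u))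
  have hB := L2norm_nonneg (pderivX (pderivY u))
  have hD := L2norm_nonneg (pderivY (pderivY u))
  have hE := L2norm_nonneg (uxxyy u)
  set A := L2norm (pderivX (pderivX u))
  set B := L2norm (pderivX (pderivY u))
  set D := L2norm (pderivY (pderivY u))
  set E := L2norm (uxxyy u)
  have hn : 0 ≤ (N : ℝ)⁻¹ := by positivity
  have hs : 0 ≤ ((σ : ℝ) ^ 3)⁻¹ := by positivity
  set n := (N : ℝ)⁻¹
  set s := ((σ : ℝ) ^ 3)⁻¹
  have a := mul_nonneg hn hA
  have b := mul_nonneg hn hB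
  have d := mul_nonneg hn hD
  have e := mul_nonneg hs hE
  nlinarith [mul_nonneg a b, mul_nonneg a d, mul_nonneg a e, mul_nonneg b d, mul_nonneg b e,
    mul_nonneg d e, sq_nonneg (n * A), sq_nonneg (n * B), sq_nonneg (n * D), sq_nonneg (s * E)]

/-- The error bound for functions that are smooth on the whole plane. -/
theorem energyNorm_error_le_of_contDiff {N σ : ℕ} (hN : 0 < N) (hσ : 0 < σ) (hd : σ ∣ N)
    {u f : ℝ × ℝ → ℝ} (hu : ContDiff ℝ 4 u) (hb : VanishOnBoundary u)
    (hf : ∀ p ∈ Omega2, -(pderivX (pderivX u) p + pderivY (pderivY u) p) + u p = f p)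
    {uh : ℝ × ℝ → ℝ} (huh : uh ∈ twoScaleSpace N σ)
    (hG : ∀ v ∈ twoScaleSpace N σ, Bform uh v = ∫ p in Omega2, f p * v p) :
    energyNorm (u - uh) ≤
      5 * ((N : ℝ)⁻¹ * semi2 u + ((σ : ℝ) ^ 3)⁻¹ * L2norm (uxxyy u)) := by
  have hI := twoScale_mem hN hσ hd hb
  obtain ⟨hIr, hI0⟩ := regular_of_mem_twoScaleSpace hN hσ hI
  obtain ⟨huhr, -⟩ := regular_of_mem_twoScaleSpace hN hσ huh
  have hur : Regular u := Regular.of_contDiff (hu.of_le (by norm_num))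
  have hdm := Submodule.sub_mem _ hI huh
  obtain ⟨hdr, hd0⟩ := regular_of_mem_twoScaleSpace hN hσ hdm
  have horth : Bform (u - uh) (twoScale N σ u - uh) = 0 := by
    rw [Regular.Bform_sub_left hur huhr hdr,
      Bform_eq_integral (hu.of_le (by norm_num)) hdr hd0 hf, hG _ hdm, sub_self]
  have hmin := Regular.Bform_self_le_of_orthogonal (hur.sub huhr) hdr horth
  rw [sub_sub_sub_cancel_right] at hmin
  have hbound := Bform_twoScale_error_le hN hσ (Nat.le_of_dvd hN hd) hu (hur.sub hIr)
    fun y hy => by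
      rw [Pi.sub_apply, hb (0, y) ⟨by simp, hy⟩ (Or.inl rfl), (hI0 0 (by simp) y).1, sub_zero]
  rw [Regular.energyNorm_eq]
  refine Real.sqrt_le_iff.2 ⟨?_, hmin.trans hbound⟩
  have : 0 ≤ semi2 u :=
    add_nonneg (add_nonneg (L2norm_nonneg _) (L2norm_nonneg _)) (L2norm_nonneg _)
  have := L2norm_nonneg (uxxyy u)
  positivity

/-! ### Reduction to globally smooth functions -/

theorem C4Near.exists_contDiff {u : ℝ × ℝ → ℝ} (hu : C4Near u) :
    ∃ w : ℝ × ℝ → ℝ, ContDiff ℝ 4 w ∧ Set.EqOn u w unitSquare := by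
  obtain ⟨U, hU, hsU, hcd⟩ := hu
  obtain ⟨K, hK, hsK, hKU⟩ := exists_compact_between isCompact_unitSquare hU hsU
  obtain ⟨χ, hχ1, hχ0, -⟩ := exists_contMDiffMap_one_nhds_of_subset_interior (n := 4)
    (modelWithCornersSelf ℝ (ℝ × ℝ)) isCompact_unitSquare.isClosed hsK
  have hχ : ContDiff ℝ 4 χ := χ.contMDiff.contDiff
  refine ⟨fun p => χ p * u p, contDiff_iff_contDiffAt.2 fun p => ?_, fun p hp => ?_⟩
  · by_cases hp : p ∈ U
    · exact hχ.contDiffAt.mul (hcd.contDiffAt (hU.mem_nhds hp))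
    · have hz : (fun p => χ p * u p) =ᶠ[nhds p] fun _ => 0 := by
        filter_upwards [hK.isClosed.isOpen_compl.mem_nhds fun h => hp (hKU h)] with q hq
        rw [hχ0 q hq, zero_mul]
      exact contDiffAt_const.congr_of_eventuallyEq hz
  · have : χ p = 1 := hχ1.self_of_nhdsSet p hp
    simp [this]

theorem pderivX_congr {v w : ℝ × ℝ → ℝ} (h : Set.EqOn v w Omega2) :
    Set.EqOn (pderivX v) (pderivX w) Omega2 := fun p hp => by
  refine Filter.EventuallyEq.deriv_eq ?_
  filter_upwards [isOpen_Ioo.mem_nhds hp.1] with x hx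
  exact h ⟨hx, hp.2⟩

theorem pderivY_congr {v w : ℝ × ℝ → ℝ} (h : Set.EqOn v w Omega2) :
    Set.EqOn (pderivY v) (pderivY w) Omega2 := fun p hp => by
  refine Filter.EventuallyEq.deriv_eq ?_
  filter_upwards [isOpen_Ioo.mem_nhds hp.2] with y hy
  exact h ⟨hp.1, hy⟩

theorem L2norm_congr {v w : ℝ × ℝ → ℝ} (h : Set.EqOn v w Omega2) : L2norm v = L2norm w := by
  unfold L2norm
  rw [setIntegral_congr_fun measurableSet_Omega2 fun p hp => by rw [h hp]]

theorem energyNorm_congr {v w : ℝ × ℝ → ℝ} (h : Set.EqOn v w Omega2) :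
    energyNorm v = energyNorm w := by
  unfold energyNorm
  rw [setIntegral_congr_fun measurableSet_Omega2 fun p hp => by
    rw [h hp, pderivX_congr h hp, pderivY_congr h hp]]

/-- Energy-norm error bound for the two-scale sparse grid finite element method. -/
theorem two_scale_FEM_error_bound :
    ∃ C : ℝ, 0 < C ∧ ∀ (N σ : ℕ), 0 < N → 0 < σ → σ ∣ N →
      ∀ u f : ℝ × ℝ → ℝ, C4Near u → VanishOnBoundary u →
        (∀ p ∈ Omega2, -(pderivX (pderivX u) p + pderivY (pderivY u) p) + u p = f p) →
        ∀ uh : ℝ × ℝ → ℝ, uh ∈ twoScaleSpace N σ →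
          (∀ v ∈ twoScaleSpace N σ, Bform uh v = ∫ p in Omega2, f p * v p) →
          energyNorm (fun p => u p - uh p) ≤
            C * ((N : ℝ)⁻¹ * semi2 u + ((σ : ℝ) ^ 3)⁻¹ * L2norm (uxxyy u)) := by
  refine ⟨5, by norm_num, fun N σ hN hσ hd u f hu hb hf uh huh hG => ?_⟩
  obtain ⟨w, hw, huw⟩ := hu.exists_contDiff
  have h : Set.EqOn u w Omega2 := huw.mono Omega2_subset_unitSquare
  have hXX := pderivX_congr (pderivX_congr h)
  have hYY := pderivY_congr (pderivY_congr h)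
  have hsemi : semi2 u = semi2 w := by
    unfold semi2
    rw [L2norm_congr hXX, L2norm_congr (pderivX_congr (pderivY_congr h)), L2norm_congr hYY]
  have hmix : L2norm (uxxyy u) = L2norm (uxxyy w) :=
    L2norm_congr (pderivX_congr (pderivX_congr hYY))
  have hen : energyNorm (fun p => u p - uh p) = energyNorm (w - uh) :=
    energyNorm_congr fun p hp => by simp only [Pi.sub_apply, h hp]
  rw [hen, hsemi, hmix]
  refine energyNorm_error_le_of_contDiff hN hσ hd hw (fun p hp hp' => ?_) (fun p hp => ?_) huh hG
  · rw [← huw hp, hb p hp hp']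
  · rw [← hXX hp, ← hYY hp, ← h hp, hf p hp]
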